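/- arXiv:1901.07271 — 2 statements merged into one kernel-verified Lean document; each statement's English description precedes it below -/
import Mathlib

section
/- Let γ be an affinely parametrized geodesic of a warped product M̂ ×_f Y, and E(u) the parallel transport along γ of a vector e orthogonal to N(0). Then the fiber component of E is Ē^i = f h N̄^i + f⁻¹ Ē^i_∥, where Ē^i_∥ is the ḡ-parallel transport along the fiber projection γ̄ of f(0) e^i (i.e. N̄^j ∇̄_j Ē^i_∥ = 0, Ē^i_∥(0) = f(0) e^i), and h(u) is the unique solution of dh/du = Ê^a ∂_a(1/f) with h(0) = 0. In particular, if e^a = 0 then the full parallel transport is E^μ(u) = (0, Ē^i_∥ / f). -/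
open Filter MeasureTheory
open scoped BigOperators Topology

noncomputable section

namespace Paper

variable {ι : Type*} [Fintype ι] [DecidableEq ι]
variable {κ : Type*} [Fintype κ] [DecidableEq κ]

/-- Coordinate partial derivative of a scalar field in the direction `ρ`. -/
def pd (h : (ι → ℝ) → ℝ) (ρ : ι) (x : ι → ℝ) : ℝ :=
  fderiv ℝ h x (Pi.single ρ 1)

/-- The inverse metric. -/
def ginv (g : (ι → ℝ) → Matrix ι ι ℝ) (x : ι → ℝ) : Matrix ι ι ℝ :=
  (g x)⁻¹

/-- Christoffel symbols `Γ^μ_{ρσ} = ½ g^{μν}(∂_ρ g_{νσ} + ∂_σ g_{νρ} − ∂_ν g_{ρσ})`. -/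
def Γc (g : (ι → ℝ) → Matrix ι ι ℝ) (μ ρ σ : ι) (x : ι → ℝ) : ℝ :=
  (1 / 2) * ∑ ν, ginv g x μ ν *
    (pd (fun y => g y ν σ) ρ x + pd (fun y => g y ν ρ) σ x - pd (fun y => g y ρ σ) ν x)

/-- Riemann curvature tensor `R^α_{βμν}`. -/
def Riem (g : (ι → ℝ) → Matrix ι ι ℝ) (α β μ ν : ι) (x : ι → ℝ) : ℝ :=
  pd (Γc g α ν β) μ x - pd (Γc g α μ β) ν x
    + ∑ lam, Γc g α μ lam x * Γc g lam ν β x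
    - ∑ lam, Γc g α ν lam x * Γc g lam μ β x

/-- Riemann tensor with the first index lowered, `R_{μνρσ} = g_{μλ} R^λ_{νρσ}`. -/
def RiemLow (g : (ι → ℝ) → Matrix ι ι ℝ) (μ ν ρ σ : ι) (x : ι → ℝ) : ℝ :=
  ∑ lam, g x μ lam * Riem g lam ν ρ σ x

/-- Ricci tensor `R_{μν} = R^ρ_{μρν}`. -/
def Ric (g : (ι → ℝ) → Matrix ι ι ℝ) (μ ν : ι) (x : ι → ℝ) : ℝ :=
  ∑ ρ, Riem g ρ μ ρ ν x

/-- Scalar product of two vectors with respect to the metric at `x`. -/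
def sq (g : (ι → ℝ) → Matrix ι ι ℝ) (x : ι → ℝ) (v w : ι → ℝ) : ℝ :=
  ∑ μ, ∑ ν, g x μ ν * v μ * w ν

/-- Velocity (tangent vector field) of a parametrized curve. -/
def vel (γ : ℝ → ι → ℝ) (u : ℝ) : ι → ℝ :=
  fun μ => deriv (fun w => γ w μ) u

/-- Covariant derivative, along the curve `γ`, of a vector field `V` given along `γ`. -/
def covD (g : (ι → ℝ) → Matrix ι ι ℝ) (γ V : ℝ → ι → ℝ) (u : ℝ) (μ : ι) : ℝ :=
  deriv (fun w => V w μ) u + ∑ ρ, ∑ σ, Γc g μ ρ σ (γ u) * vel γ u ρ * V u σ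

/-- The (affinely parametrized) geodesic equation at parameter value `u`. -/
def GeodesicAt (g : (ι → ℝ) → Matrix ι ι ℝ) (γ : ℝ → ι → ℝ) (u : ℝ) : Prop :=
  ∀ μ, covD g γ (vel γ) u μ = 0

/-- `γ` is an affinely parametrized geodesic of `g`. -/
def IsGeodesic (g : (ι → ℝ) → Matrix ι ι ℝ) (γ : ℝ → ι → ℝ) : Prop :=
  ∀ u, GeodesicAt g γ u

/-- `E` is parallelly transported along `γ`. -/
def IsParallel (g : (ι → ℝ) → Matrix ι ι ℝ) (γ E : ℝ → ι → ℝ) : Prop :=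
  ∀ u μ, covD g γ E u μ = 0

def SmoothCurve (γ : ℝ → ι → ℝ) : Prop :=
  ∀ μ, ContDiff ℝ (⊤ : ℕ∞) fun u => γ u μ

/-- A smooth symmetric everywhere-nondegenerate metric. -/
def SmoothMetric (g : (ι → ℝ) → Matrix ι ι ℝ) : Prop :=
  (∀ μ ν, ContDiff ℝ (⊤ : ℕ∞) fun x => g x μ ν) ∧
    (∀ x μ ν, g x μ ν = g x ν μ) ∧ ∀ x, IsUnit (g x).det

/-- Lorentzian signature `(−,+,…,+)`: there is a timelike vector whose `g`-orthogonal
complement is positive definite. -/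
def Lorentzian (g : (ι → ℝ) → Matrix ι ι ℝ) : Prop :=
  SmoothMetric g ∧
    ∀ x, ∃ t : ι → ℝ, sq g x t t < 0 ∧ ∀ v : ι → ℝ, sq g x t v = 0 → v ≠ 0 → 0 < sq g x v v

/-- Riemannian (positive definite) metric. -/
def Riemannian (g : (ι → ℝ) → Matrix ι ι ℝ) : Prop :=
  SmoothMetric g ∧ ∀ x, ∀ v : ι → ℝ, v ≠ 0 → 0 < sq g x v v

def NullVec (g : (ι → ℝ) → Matrix ι ι ℝ) (x v : ι → ℝ) : Prop :=
  sq g x v v = 0 ∧ v ≠ 0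

/-- A time orientation: an everywhere timelike vector field. -/
def TimeOrientation (g : (ι → ℝ) → Matrix ι ι ℝ) (T : (ι → ℝ) → ι → ℝ) : Prop :=
  ∀ x, sq g x (T x) (T x) < 0

/-- `v` is a future-pointing causal vector at `x` (wrt the time orientation `T`). -/
def FutureCausal (g : (ι → ℝ) → Matrix ι ι ℝ) (T : (ι → ℝ) → ι → ℝ) (x v : ι → ℝ) : Prop :=
  sq g x v v ≤ 0 ∧ v ≠ 0 ∧ sq g x (T x) v < 0

/-- `S` is met exactly once by every inextendible future-directed causal curve
(inextendibility being encoded by parametrization by Euclidean arclength on all of `ℝ`). -/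
def IsCauchySurface (g : (ι → ℝ) → Matrix ι ι ℝ) (T : (ι → ℝ) → ι → ℝ)
    (S : Set (ι → ℝ)) : Prop :=
  ∀ γ : ℝ → ι → ℝ, (∀ μ, Differentiable ℝ fun u => γ u μ) →
    (∀ u, FutureCausal g T (γ u) (vel γ u)) →
    (∀ u, ∑ μ, (vel γ u μ) ^ 2 = 1) → ∃! u, γ u ∈ S

/-- `g`-gradient vector of a scalar function. -/
def gradVec (g : (ι → ℝ) → Matrix ι ι ℝ) (τ : (ι → ℝ) → ℝ) (x : ι → ℝ) : ι → ℝ :=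
  fun μ => ∑ ν, ginv g x μ ν * pd τ ν x

/-- Existence of a non-compact (spacelike) Cauchy hypersurface, encoded as a regular
level set of a smooth function with timelike gradient. -/
def HasNoncompactCauchySurface (g : (ι → ℝ) → Matrix ι ι ℝ)
    (T : (ι → ℝ) → ι → ℝ) : Prop :=
  ∃ τ : (ι → ℝ) → ℝ, ContDiff ℝ (⊤ : ℕ∞) τ ∧ ¬ IsCompact {x | τ x = 0} ∧
    (∀ x, τ x = 0 → sq g x (gradVec g τ x) (gradVec g τ x) < 0) ∧
    IsCauchySurface g T {x | τ x = 0}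

/-- Null geodesic completeness: every null initial datum extends to a geodesic
defined for all values of the affine parameter. -/
def NullComplete (g : (ι → ℝ) → Matrix ι ι ℝ) : Prop :=
  ∀ x v : ι → ℝ, NullVec g x v →
    ∃ γ : ℝ → ι → ℝ, SmoothCurve γ ∧ γ 0 = x ∧ vel γ 0 = v ∧ IsGeodesic g γ

/-- Future null geodesic completeness. -/
def FutureNullComplete (g : (ι → ℝ) → Matrix ι ι ℝ) (T : (ι → ℝ) → ι → ℝ) : Prop :=
  ∀ x v : ι → ℝ, NullVec g x v → FutureCausal g T x v →
    ∃ γ : ℝ → ι → ℝ, SmoothCurve γ ∧ γ 0 = x ∧ vel γ 0 = v ∧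
      ∀ u, 0 ≤ u → GeodesicAt g γ u

/-! ### Submanifolds given implicitly as regular zero sets -/

/-- Differential (lowered normal covectors) of the defining map `F`. -/
def dFm (F : (ι → ℝ) → κ → ℝ) (α : κ) (μ : ι) (x : ι → ℝ) : ℝ :=
  pd (fun y => F y α) μ x

/-- The normal vectors `ν_α = grad F^α` spanning the normal space. -/
def normalBasis (g : (ι → ℝ) → Matrix ι ι ℝ) (F : (ι → ℝ) → κ → ℝ) (α : κ)
    (x : ι → ℝ) : ι → ℝ :=
  fun μ => ∑ ν, ginv g x μ ν * dFm F α ν x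

/-- Gram matrix `W_{αβ} = g(ν_α, ν_β)` of the normals. -/
def gram (g : (ι → ℝ) → Matrix ι ι ℝ) (F : (ι → ℝ) → κ → ℝ) (x : ι → ℝ) :
    Matrix κ κ ℝ :=
  Matrix.of fun α β => ∑ μ, dFm F α μ x * normalBasis g F β x μ

/-- The (contravariant) orthogonal projector onto the tangent space of `{F = 0}`. -/
def tanProj (g : (ι → ℝ) → Matrix ι ι ℝ) (F : (ι → ℝ) → κ → ℝ) (x : ι → ℝ)
    (μ ν : ι) : ℝ :=
  ginv g x μ ν -
    ∑ α, ∑ β, (gram g F x)⁻¹ α β * normalBasis g F α x μ * normalBasis g F β x ν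

/-- Covariant Hessian `∇_μ ∇_ν F^α`. -/
def hessF (g : (ι → ℝ) → Matrix ι ι ℝ) (F : (ι → ℝ) → κ → ℝ) (α : κ) (μ ν : ι)
    (x : ι → ℝ) : ℝ :=
  pd (fun y => dFm F α ν y) μ x - ∑ lam, Γc g lam μ ν x * dFm F α lam x

/-- The expansion `θ(n)` of the submanifold `{F = 0}` along the normal
`n = ∑ c_α ν_α`, namely `θ(n) = ∑_α c_α h^{μν} ∇_μ∇_ν F^α`. -/
def expansionCoeff (g : (ι → ℝ) → Matrix ι ι ℝ) (F : (ι → ℝ) → κ → ℝ) (x : ι → ℝ)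
    (c : κ → ℝ) : ℝ :=
  ∑ α, c α * ∑ μ, ∑ ν, tanProj g F x μ ν * hessF g F α μ ν x

/-- `v` is tangent to the level set `{F = 0}` at `x`. -/
def TangentTo (F : (ι → ℝ) → κ → ℝ) (x v : ι → ℝ) : Prop :=
  ∀ α, ∑ μ, dFm F α μ x * v μ = 0

/-- The normal vector with components `c` in the basis of normals. -/
def NormalComb (g : (ι → ℝ) → Matrix ι ι ℝ) (F : (ι → ℝ) → κ → ℝ) (x : ι → ℝ)
    (c : κ → ℝ) : ι → ℝ :=
  fun μ => ∑ α, c α * normalBasis g F α x μ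

/-- A closed (compact without boundary) spacelike submanifold, given as the regular
zero set of the smooth map `F`, of co-dimension `card κ`. -/
def ClosedSpacelikeSubmanifold (g : (ι → ℝ) → Matrix ι ι ℝ)
    (F : (ι → ℝ) → κ → ℝ) : Prop :=
  (∀ α, ContDiff ℝ (⊤ : ℕ∞) fun x => F x α) ∧
    IsCompact {x | ∀ α, F x α = 0} ∧ {x | ∀ α, F x α = 0}.Nonempty ∧
    (∀ x, (∀ α, F x α = 0) → IsUnit (gram g F x).det) ∧
    (∀ x, (∀ α, F x α = 0) → ∀ v, TangentTo F x v → v ≠ 0 → 0 < sq g x v v)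

/-- Future-trapped: every future-pointing causal normal has negative expansion. -/
def FutureTrapped (g : (ι → ℝ) → Matrix ι ι ℝ) (T : (ι → ℝ) → ι → ℝ)
    (F : (ι → ℝ) → κ → ℝ) : Prop :=
  ∀ x, (∀ α, F x α = 0) → ∀ c : κ → ℝ,
    FutureCausal g T x (NormalComb g F x c) → expansionCoeff g F x c < 0

/-! ### Warped products -/

def basePt {d₁ d₂ : ℕ} (x : (Fin d₁ ⊕ Fin d₂) → ℝ) : Fin d₁ → ℝ :=
  fun a => x (Sum.inl a)

def fibPt {d₁ d₂ : ℕ} (x : (Fin d₁ ⊕ Fin d₂) → ℝ) : Fin d₂ → ℝ :=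
  fun i => x (Sum.inr i)

/-- The warped product metric `g = ĝ + f² ḡ` in adapted coordinates. -/
def warped {d₁ d₂ : ℕ} (gB : (Fin d₁ → ℝ) → Matrix (Fin d₁) (Fin d₁) ℝ)
    (gF : (Fin d₂ → ℝ) → Matrix (Fin d₂) (Fin d₂) ℝ) (f : (Fin d₁ → ℝ) → ℝ) :
    ((Fin d₁ ⊕ Fin d₂) → ℝ) → Matrix (Fin d₁ ⊕ Fin d₂) (Fin d₁ ⊕ Fin d₂) ℝ :=
  fun x => Matrix.of fun μ ν =>
    match μ, ν with
    | Sum.inl a, Sum.inl b => gB (basePt x) a b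
    | Sum.inl _, Sum.inr _ => 0
    | Sum.inr _, Sum.inl _ => 0
    | Sum.inr i, Sum.inr j => (f (basePt x)) ^ 2 * gF (fibPt x) i j

/-- Projection of a spacetime curve to the base. -/
def baseCurve {d₁ d₂ : ℕ} (γ : ℝ → (Fin d₁ ⊕ Fin d₂) → ℝ) : ℝ → Fin d₁ → ℝ :=
  fun u => basePt (γ u)

/-- Projection of a spacetime curve to the fiber. -/
def fibCurve {d₁ d₂ : ℕ} (γ : ℝ → (Fin d₁ ⊕ Fin d₂) → ℝ) : ℝ → Fin d₂ → ℝ :=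
  fun u => fibPt (γ u)

/-- Lift of a base vector to the warped product (vanishing fiber components). -/
def liftVec {d₁ d₂ : ℕ} (v : Fin d₁ → ℝ) : (Fin d₁ ⊕ Fin d₂) → ℝ :=
  fun μ => match μ with
  | Sum.inl a => v a
  | Sum.inr _ => 0

/-- Lift of a base vector field (e.g. a time orientation) to the warped product. -/
def liftT {d₁ d₂ : ℕ} (T : (Fin d₁ → ℝ) → Fin d₁ → ℝ) :
    ((Fin d₁ ⊕ Fin d₂) → ℝ) → (Fin d₁ ⊕ Fin d₂) → ℝ :=
  fun x => liftVec (T (basePt x))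

/-- Defining map of the lift `ζ_p ⊆ Y_p` of the submanifold `{Fb = 0} ⊆ Y`. -/
def liftF {d₁ d₂ m' : ℕ} (p : Fin d₁ → ℝ) (Fb : (Fin d₂ → ℝ) → Fin m' → ℝ) :
    ((Fin d₁ ⊕ Fin d₂) → ℝ) → (Fin d₁ ⊕ Fin m') → ℝ :=
  fun x α => match α with
  | Sum.inl a => x (Sum.inl a) - p a
  | Sum.inr β => Fb (fibPt x) β

/-- Covariant Hessian `∇_μ∇_ν f` of a scalar function. -/
def hess (g : (ι → ℝ) → Matrix ι ι ℝ) (f : (ι → ℝ) → ℝ) (μ ν : ι) (x : ι → ℝ) : ℝ :=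
  pd (fun y => pd f ν y) μ x - ∑ lam, Γc g lam μ ν x * pd f lam x

/-- `∇^μ f ∇_μ f`. -/
def gradSq (g : (ι → ℝ) → Matrix ι ι ℝ) (f : (ι → ℝ) → ℝ) (x : ι → ℝ) : ℝ :=
  ∑ μ, ∑ ν, ginv g x μ ν * pd f μ x * pd f ν x

/-! ### Parametrized submanifolds and their expansions -/

/-- Partial derivative of a parametrization `φ`. -/
def dpar {k : ℕ} (φ : (Fin k → ℝ) → ι → ℝ) (A : Fin k) (μ : ι)
    (y : Fin k → ℝ) : ℝ :=
  fderiv ℝ (fun z => φ z μ) y (Pi.single A 1)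

/-- First fundamental form of a parametrized submanifold. -/
def firstFF {k : ℕ} (g : (ι → ℝ) → Matrix ι ι ℝ) (φ : (Fin k → ℝ) → ι → ℝ)
    (y : Fin k → ℝ) : Matrix (Fin k) (Fin k) ℝ :=
  Matrix.of fun A B => ∑ μ, ∑ ν, g (φ y) μ ν * dpar φ A μ y * dpar φ B ν y

/-- The expansion `θ(n) = n_μ H^μ` of a parametrized submanifold along a normal `n`,
via `θ(n) = −γ^{AB} n_μ (∂_A∂_B φ^μ + Γ^μ_{ρσ} ∂_A φ^ρ ∂_B φ^σ)`. -/
def expansionPar {k : ℕ} (g : (ι → ℝ) → Matrix ι ι ℝ) (φ : (Fin k → ℝ) → ι → ℝ)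
    (y : Fin k → ℝ) (n : ι → ℝ) : ℝ :=
  - ∑ A, ∑ B, (firstFF g φ y)⁻¹ A B *
      ∑ μ, (∑ ν, g (φ y) μ ν * n ν) *
        (fderiv ℝ (fun z => dpar φ B μ z) y (Pi.single A 1)
          + ∑ ρ, ∑ σ, Γc g μ ρ σ (φ y) * dpar φ A ρ y * dpar φ B σ y)


section aux

lemma lower_Γ (g : (ι → ℝ) → Matrix ι ι ℝ) (x : ι → ℝ) (hd : IsUnit (g x).det) (k ρ σ : ι) :
    ∑ l, g x k l * Γc g l ρ σ x = (1/2) * (pd (fun y => g y k σ) ρ x + pd (fun y => g y k ρ) σ x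
      - pd (fun y => g y ρ σ) k x) := by
  have h1 : g x * ginv g x = 1 := Matrix.mul_nonsing_inv _ hd
  set c : ι → ℝ := fun ν => (pd (fun y => g y ν σ) ρ x + pd (fun y => g y ν ρ) σ x
      - pd (fun y => g y ρ σ) ν x) with hc
  have : (g x).mulVec ((ginv g x).mulVec c) = c := by
    rw [Matrix.mulVec_mulVec, h1, Matrix.one_mulVec]
  have h2 := congrFun this k
  simp only [Matrix.mulVec, dotProduct] at h2
  change _ = (1/2) * c k
  rw [← h2, Finset.mul_sum]
  refine Finset.sum_congr rfl fun l _ => ?_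
  simp only [Γc, hc]; ring

lemma hasDerivAt_comp_pd (φ : (ι → ℝ) → ℝ) (γ : ℝ → ι → ℝ) (u : ℝ)
    (hφ : DifferentiableAt ℝ φ (γ u)) (hγ : ∀ μ, DifferentiableAt ℝ (fun w => γ w μ) u) :
    HasDerivAt (fun w => φ (γ w)) (∑ ρ, pd φ ρ (γ u) * vel γ u ρ) u := by
  have h1 : HasDerivAt γ (vel γ u) u := hasDerivAt_pi.2 fun μ => (hγ μ).hasDerivAt
  have h2 := hφ.hasFDerivAt.comp_hasDerivAt u h1
  have h3 := congrArg (fderiv ℝ φ (γ u)) (pi_eq_sum_univ' (vel γ u))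
  rw [map_sum] at h3
  have h4 : ∑ ρ, pd φ ρ (γ u) * vel γ u ρ = fderiv ℝ φ (γ u) (vel γ u) := by
    rw [h3]
    refine Finset.sum_congr rfl fun ρ _ => ?_
    rw [map_smul, smul_eq_mul, mul_comm]
    rfl
  rw [h4]; exact h2

lemma sq_deriv (g : (ι → ℝ) → Matrix ι ι ℝ) (hg : ∀ μ ν, Differentiable ℝ fun x => g x μ ν)
    (hs : ∀ x μ ν, g x μ ν = g x ν μ) (hd : ∀ x, IsUnit (g x).det)
    (γ V W : ℝ → ι → ℝ) (u : ℝ) (hγ : ∀ μ, DifferentiableAt ℝ (fun w => γ w μ) u)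
    (hV : ∀ μ, DifferentiableAt ℝ (fun w => V w μ) u)
    (hW : ∀ μ, DifferentiableAt ℝ (fun w => W w μ) u)
    (pV : ∀ μ, covD g γ V u μ = 0) (pW : ∀ μ, covD g γ W u μ = 0) :
    HasDerivAt (fun w => sq g (γ w) (V w) (W w)) 0 u := by
  have key : HasDerivAt (fun w => sq g (γ w) (V w) (W w))
      (∑ μ, ∑ ν, (((∑ ρ, pd (fun y => g y μ ν) ρ (γ u) * vel γ u ρ) * V u μ
        + g (γ u) μ ν * deriv (fun w => V w μ) u) * W u ν
        + g (γ u) μ ν * V u μ * deriv (fun w => W w ν) u)) u := by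
    unfold sq
    refine HasDerivAt.fun_sum fun μ _ => HasDerivAt.fun_sum fun ν _ => ?_
    exact ((hasDerivAt_comp_pd (fun y => g y μ ν) γ u (hg μ ν _) hγ).mul (hV μ).hasDerivAt).mul
      (hW ν).hasDerivAt
  convert key using 1
  symm
  have eV : ∀ μ, deriv (fun w => V w μ) u
      = -∑ ρ, ∑ σ, Γc g μ ρ σ (γ u) * vel γ u ρ * V u σ := fun μ => by
    have := pV μ; unfold covD at this; linarith
  have eW : ∀ μ, deriv (fun w => W w μ) u
      = -∑ ρ, ∑ σ, Γc g μ ρ σ (γ u) * vel γ u ρ * W u σ := fun μ => by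
    have := pW μ; unfold covD at this; linarith
  have lowr : ∀ (X : ℝ → ι → ℝ) (ν : ι),
      ∑ μ, g (γ u) ν μ * (∑ ρ, ∑ σ, Γc g μ ρ σ (γ u) * vel γ u ρ * X u σ)
      = ∑ σ, ∑ ρ, (1/2) * (pd (fun y => g y ν σ) ρ (γ u) + pd (fun y => g y ν ρ) σ (γ u)
      - pd (fun y => g y ρ σ) ν (γ u)) * vel γ u ρ * X u σ := by
    intro X ν
    simp_rw [← lower_Γ g (γ u) (hd _), Finset.mul_sum, Finset.sum_mul]
    rw [Finset.sum_comm]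
    rw [Finset.sum_congr rfl fun ρ _ => Finset.sum_comm]
    rw [Finset.sum_comm]
    refine Finset.sum_congr rfl fun σ _ => Finset.sum_congr rfl fun ρ _ =>
      Finset.sum_congr rfl fun μ _ => ?_
    ring
  have A : ∑ μ, ∑ ν, g (γ u) μ ν * deriv (fun w => V w μ) u * W u ν
      = - ∑ ν, ∑ μ, (∑ ρ, (1/2) * (pd (fun y => g y ν μ) ρ (γ u) + pd (fun y => g y ν ρ) μ (γ u)
      - pd (fun y => g y ρ μ) ν (γ u)) * vel γ u ρ) * V u μ * W u ν := by
    rw [Finset.sum_comm, ← Finset.sum_neg_distrib]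
    refine Finset.sum_congr rfl fun ν _ => ?_
    have := lowr V ν
    simp_rw [eV]
    simp_rw [← Finset.sum_mul] at this ⊢
    rw [← neg_mul, ← this, ← Finset.sum_neg_distrib]
    congr 1
    refine Finset.sum_congr rfl fun μ _ => ?_
    rw [hs _ μ ν]; ring
  have B : ∑ μ, ∑ ν, g (γ u) μ ν * V u μ * deriv (fun w => W w ν) u
      = - ∑ μ, ∑ ν, (∑ ρ, (1/2) * (pd (fun y => g y μ ν) ρ (γ u) + pd (fun y => g y μ ρ) ν (γ u)
      - pd (fun y => g y ρ ν) μ (γ u)) * vel γ u ρ) * V u μ * W u ν := by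
    rw [← Finset.sum_neg_distrib]
    refine Finset.sum_congr rfl fun μ _ => ?_
    have := lowr W μ
    simp_rw [eW]
    have e2 : ∑ ν, (∑ ρ, (1/2) * (pd (fun y => g y μ ν) ρ (γ u) + pd (fun y => g y μ ρ) ν (γ u)
      - pd (fun y => g y ρ ν) μ (γ u)) * vel γ u ρ) * V u μ * W u ν = 
      V u μ * ∑ ν, (∑ ρ, (1/2) * (pd (fun y => g y μ ν) ρ (γ u) + pd (fun y => g y μ ρ) ν (γ u)
      - pd (fun y => g y ρ ν) μ (γ u)) * vel γ u ρ) * W u ν := by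
      rw [Finset.mul_sum]; exact Finset.sum_congr rfl fun ν _ => by ring
    rw [e2]
    simp_rw [← Finset.sum_mul] at this
    rw [← this, Finset.mul_sum, ← Finset.sum_neg_distrib]
    refine Finset.sum_congr rfl fun ν _ => ?_
    ring
  have split : ∀ μ ν, (((∑ ρ, pd (fun y => g y μ ν) ρ (γ u) * vel γ u ρ) * V u μ
        + g (γ u) μ ν * deriv (fun w => V w μ) u) * W u ν
        + g (γ u) μ ν * V u μ * deriv (fun w => W w ν) u)
        = (∑ ρ, pd (fun y => g y μ ν) ρ (γ u) * vel γ u ρ) * V u μ * W u ν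
          + g (γ u) μ ν * deriv (fun w => V w μ) u * W u ν
          + g (γ u) μ ν * V u μ * deriv (fun w => W w ν) u := fun μ ν => by ring
  simp_rw [split, Finset.sum_add_distrib]
  rw [A, B, Finset.sum_comm (f := fun ν μ => (∑ ρ, (1/2) * (pd (fun y => g y ν μ) ρ (γ u) + pd (fun y => g y ν ρ) μ (γ u)
      - pd (fun y => g y ρ μ) ν (γ u)) * vel γ u ρ) * V u μ * W u ν)]
  rw [← Finset.sum_neg_distrib, ← Finset.sum_neg_distrib, ← Finset.sum_add_distrib,
    ← Finset.sum_add_distrib]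
  refine Finset.sum_eq_zero fun μ _ => ?_
  rw [← Finset.sum_neg_distrib, ← Finset.sum_neg_distrib, ← Finset.sum_add_distrib,
    ← Finset.sum_add_distrib]
  refine Finset.sum_eq_zero fun ν _ => ?_
  have sg : ∀ a b, (fun y => g y a b) = fun y => g y b a := fun a b => funext fun y => hs y a b
  have : ∑ ρ, pd (fun y => g y μ ν) ρ (γ u) * vel γ u ρ
    = (∑ ρ, (1/2) * (pd (fun y => g y ν μ) ρ (γ u) + pd (fun y => g y ν ρ) μ (γ u)
      - pd (fun y => g y ρ μ) ν (γ u)) * vel γ u ρ) + ∑ ρ, (1/2) * (pd (fun y => g y μ ν) ρ (γ u) + pd (fun y => g y μ ρ) ν (γ u)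
      - pd (fun y => g y ρ ν) μ (γ u)) * vel γ u ρ := by
    rw [← Finset.sum_add_distrib]
    refine Finset.sum_congr rfl fun ρ _ => ?_
    rw [sg ν μ, sg ν ρ, sg ρ μ]; ring
  rw [this]; ring

end aux

section w
variable {d₁ d₂ : ℕ}
    (gB : (Fin d₁ → ℝ) → Matrix (Fin d₁) (Fin d₁) ℝ)
    (gF : (Fin d₂ → ℝ) → Matrix (Fin d₂) (Fin d₂) ℝ)
    (f : (Fin d₁ → ℝ) → ℝ)

lemma warped_mul (x : (Fin d₁ ⊕ Fin d₂) → ℝ) (hB : IsUnit (gB (basePt x)).det)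
    (hF : IsUnit (gF (fibPt x)).det) (hf : f (basePt x) ≠ 0) :
    warped gB gF f x * Matrix.fromBlocks (ginv gB (basePt x)) 0 0
      (((f (basePt x))^2)⁻¹ • ginv gF (fibPt x)) = 1 := by
  have : warped gB gF f x = Matrix.fromBlocks (gB (basePt x)) 0 0
      ((f (basePt x))^2 • gF (fibPt x)) := by
    ext (i|i) (j|j) <;> simp [warped]
  rw [this, Matrix.fromBlocks_multiply]
  simp only [ginv, Matrix.mul_nonsing_inv _ hB, Matrix.mul_zero, Matrix.zero_mul, add_zero, zero_add,
    smul_mul_smul_comm, Matrix.mul_nonsing_inv _ hF]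
  rw [mul_inv_cancel₀ (pow_ne_zero 2 hf), one_smul, Matrix.fromBlocks_one]

lemma warped_det (x : (Fin d₁ ⊕ Fin d₂) → ℝ) (hB : IsUnit (gB (basePt x)).det)
    (hF : IsUnit (gF (fibPt x)).det) (hf : f (basePt x) ≠ 0) :
    IsUnit (warped gB gF f x).det :=
  Matrix.isUnit_det_of_right_inverse (warped_mul gB gF f x hB hF hf)

lemma warped_ginv (x : (Fin d₁ ⊕ Fin d₂) → ℝ) (hB : IsUnit (gB (basePt x)).det)
    (hF : IsUnit (gF (fibPt x)).det) (hf : f (basePt x) ≠ 0) :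
    ginv (warped gB gF f) x = Matrix.fromBlocks (ginv gB (basePt x)) 0 0
      (((f (basePt x))^2)⁻¹ • ginv gF (fibPt x)) :=
  Matrix.inv_eq_right_inv (warped_mul gB gF f x hB hF hf)

def baseL : ((Fin d₁ ⊕ Fin d₂) → ℝ) →L[ℝ] (Fin d₁ → ℝ) :=
  ContinuousLinearMap.pi fun a => ContinuousLinearMap.proj (Sum.inl a)
def fibL : ((Fin d₁ ⊕ Fin d₂) → ℝ) →L[ℝ] (Fin d₂ → ℝ) :=
  ContinuousLinearMap.pi fun a => ContinuousLinearMap.proj (Sum.inr a)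

lemma hasF_base (φ : (Fin d₁ → ℝ) → ℝ) (x : (Fin d₁ ⊕ Fin d₂) → ℝ)
    (h : DifferentiableAt ℝ φ (basePt x)) :
    HasFDerivAt (fun y : (Fin d₁ ⊕ Fin d₂) → ℝ => φ (basePt y))
      ((fderiv ℝ φ (basePt x)).comp baseL) x :=
  HasFDerivAt.comp (g := φ) x (h.hasFDerivAt) (baseL (d₁ := d₁) (d₂ := d₂)).hasFDerivAt

lemma hasF_fib (φ : (Fin d₂ → ℝ) → ℝ) (x : (Fin d₁ ⊕ Fin d₂) → ℝ)
    (h : DifferentiableAt ℝ φ (fibPt x)) :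
    HasFDerivAt (fun y : (Fin d₁ ⊕ Fin d₂) → ℝ => φ (fibPt y))
      ((fderiv ℝ φ (fibPt x)).comp fibL) x :=
  HasFDerivAt.comp (g := φ) x (h.hasFDerivAt) (fibL (d₁ := d₁) (d₂ := d₂)).hasFDerivAt

lemma baseL_inl (c : Fin d₁) : baseL (d₂ := d₂) (Pi.single (Sum.inl c) 1) = Pi.single c 1 := by
  ext a; simp [baseL, Pi.single_apply]
lemma baseL_inr (c : Fin d₂) : baseL (d₁ := d₁) (Pi.single (Sum.inr c) 1) = 0 := by
  ext a; simp [baseL, Pi.single_apply]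
lemma fibL_inl (c : Fin d₁) : fibL (d₂ := d₂) (Pi.single (Sum.inl c) 1) = 0 := by
  ext a; simp [fibL, Pi.single_apply]
lemma fibL_inr (c : Fin d₂) : fibL (d₁ := d₁) (Pi.single (Sum.inr c) 1) = Pi.single c 1 := by
  ext a; simp [fibL, Pi.single_apply]


lemma warped_ll (a b) (y : (Fin d₁ ⊕ Fin d₂) → ℝ) :
    warped gB gF f y (Sum.inl a) (Sum.inl b) = gB (basePt y) a b := rfl
lemma warped_lr (a b) (y : (Fin d₁ ⊕ Fin d₂) → ℝ) :
    warped gB gF f y (Sum.inl a) (Sum.inr b) = 0 := rfl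
lemma warped_rl (a b) (y : (Fin d₁ ⊕ Fin d₂) → ℝ) :
    warped gB gF f y (Sum.inr a) (Sum.inl b) = 0 := rfl
lemma warped_rr (a b) (y : (Fin d₁ ⊕ Fin d₂) → ℝ) :
    warped gB gF f y (Sum.inr a) (Sum.inr b) = (f (basePt y)) ^ 2 * gF (fibPt y) a b := rfl

lemma pd_zero (c : Fin d₁ ⊕ Fin d₂) (x : (Fin d₁ ⊕ Fin d₂) → ℝ) :
    pd (fun _ => (0:ℝ)) c x = 0 := by simp [pd]

lemma pd_base_l (φ : (Fin d₁ → ℝ) → ℝ) (h : Differentiable ℝ φ) (c)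
    (x : (Fin d₁ ⊕ Fin d₂) → ℝ) :
    pd (fun y : (Fin d₁ ⊕ Fin d₂) → ℝ => φ (basePt y)) (Sum.inl c) x = pd φ c (basePt x) := by
  simp only [pd]
  rw [(hasF_base φ x (h _)).fderiv]; simp [baseL_inl]

lemma pd_base_r (φ : (Fin d₁ → ℝ) → ℝ) (h : Differentiable ℝ φ) (c)
    (x : (Fin d₁ ⊕ Fin d₂) → ℝ) :
    pd (fun y : (Fin d₁ ⊕ Fin d₂) → ℝ => φ (basePt y)) (Sum.inr c) x = 0 := by
  simp only [pd]
  rw [(hasF_base φ x (h _)).fderiv]; simp [baseL_inr]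

lemma pd_rr_l (φ : (Fin d₂ → ℝ) → ℝ) (hF : Differentiable ℝ φ) (hf : Differentiable ℝ f) (c)
    (x : (Fin d₁ ⊕ Fin d₂) → ℝ) :
    pd (fun y : (Fin d₁ ⊕ Fin d₂) → ℝ => (f (basePt y)) ^ 2 * φ (fibPt y)) (Sum.inl c) x
      = 2 * f (basePt x) * pd f c (basePt x) * φ (fibPt x) := by
  simp only [pd]
  rw [(HasFDerivAt.fun_mul (HasFDerivAt.pow (hasF_base f x (hf _)) 2) (hasF_fib φ x (hF _))).fderiv]; simp [baseL_inl, fibL_inl]; ring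

lemma pd_rr_r (φ : (Fin d₂ → ℝ) → ℝ) (hF : Differentiable ℝ φ) (hf : Differentiable ℝ f) (c)
    (x : (Fin d₁ ⊕ Fin d₂) → ℝ) :
    pd (fun y : (Fin d₁ ⊕ Fin d₂) → ℝ => (f (basePt y)) ^ 2 * φ (fibPt y)) (Sum.inr c) x
      = (f (basePt x))^2 * pd φ c (fibPt x) := by
  simp only [pd]
  rw [(HasFDerivAt.fun_mul (HasFDerivAt.pow (hasF_base f x (hf _)) 2) (hasF_fib φ x (hF _))).fderiv]; simp [baseL_inr, fibL_inr]

/-- pointwise nondegeneracy and differentiability data -/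
structure WD : Prop where
  hB : ∀ μ ν, Differentiable ℝ fun x => gB x μ ν
  hF : ∀ μ ν, Differentiable ℝ fun x => gF x μ ν
  sF : ∀ x μ ν, gF x μ ν = gF x ν μ
  hf : Differentiable ℝ f
  dB : ∀ x, IsUnit (gB x).det
  dF : ∀ x, IsUnit (gF x).det
  f0 : ∀ x, f x ≠ 0

variable {gB gF f}

lemma Γ_lll (H : WD gB gF f) (a b c) (x : (Fin d₁ ⊕ Fin d₂) → ℝ) :
    Γc (warped gB gF f) (Sum.inl a) (Sum.inl b) (Sum.inl c) x = Γc gB a b c (basePt x) := by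
  unfold Γc
  rw [warped_ginv gB gF f x (H.dB _) (H.dF _) (H.f0 _)]
  simp [warped_ll, pd_base_l _ (H.hB _ _)]

lemma Γ_llr (H : WD gB gF f) (a b c) (x : (Fin d₁ ⊕ Fin d₂) → ℝ) :
    Γc (warped gB gF f) (Sum.inl a) (Sum.inl b) (Sum.inr c) x = 0 := by
  unfold Γc
  rw [warped_ginv gB gF f x (H.dB _) (H.dF _) (H.f0 _)]
  simp [warped_ll, warped_lr, pd_base_r _ (H.hB _ _), pd_zero]

lemma Γ_lrl (H : WD gB gF f) (a b c) (x : (Fin d₁ ⊕ Fin d₂) → ℝ) :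
    Γc (warped gB gF f) (Sum.inl a) (Sum.inr b) (Sum.inl c) x = 0 := by
  unfold Γc
  rw [warped_ginv gB gF f x (H.dB _) (H.dF _) (H.f0 _)]
  simp [warped_ll, warped_lr, warped_rl, pd_base_r _ (H.hB _ _), pd_zero]

lemma Γ_lrr (H : WD gB gF f) (a j k) (x : (Fin d₁ ⊕ Fin d₂) → ℝ) :
    Γc (warped gB gF f) (Sum.inl a) (Sum.inr j) (Sum.inr k) x
      = - (f (basePt x) * gradVec gB f (basePt x) a) * gF (fibPt x) j k := by
  unfold Γc gradVec
  rw [warped_ginv gB gF f x (H.dB _) (H.dF _) (H.f0 _)]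
  simp only [Fintype.sum_sum_type, Matrix.fromBlocks_apply₁₁, Matrix.fromBlocks_apply₁₂,
    warped_lr, warped_rr, pd_zero, pd_rr_l f _ (H.hF _ _) H.hf, Matrix.zero_apply, zero_mul,
    Finset.sum_const_zero, add_zero, zero_sub]
  rw [Finset.mul_sum, Finset.mul_sum, ← Finset.sum_neg_distrib, Finset.sum_mul]
  exact Finset.sum_congr rfl fun b _ => by ring

lemma Γ_rll (H : WD gB gF f) (a b c) (x : (Fin d₁ ⊕ Fin d₂) → ℝ) :
    Γc (warped gB gF f) (Sum.inr a) (Sum.inl b) (Sum.inl c) x = 0 := by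
  unfold Γc
  rw [warped_ginv gB gF f x (H.dB _) (H.dF _) (H.f0 _)]
  simp [warped_ll, warped_rl, pd_base_r _ (H.hB _ _), pd_zero]

lemma ginv_mul_F (H : WD gB gF f) (i j) (y : Fin d₂ → ℝ) :
    ∑ k, ginv gF y i k * gF y k j = if i = j then 1 else 0 := by
  have := congrFun (congrFun (Matrix.nonsing_inv_mul _ (H.dF y)) i) j
  rw [Matrix.mul_apply, Matrix.one_apply] at this
  exact this

lemma Γ_rlr (H : WD gB gF f) (i b j) (x : (Fin d₁ ⊕ Fin d₂) → ℝ) :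
    Γc (warped gB gF f) (Sum.inr i) (Sum.inl b) (Sum.inr j) x
      = (f (basePt x))⁻¹ * pd f b (basePt x) * if i = j then 1 else 0 := by
  unfold Γc
  rw [warped_ginv gB gF f x (H.dB _) (H.dF _) (H.f0 _)]
  simp only [Fintype.sum_sum_type, Matrix.fromBlocks_apply₂₁, Matrix.fromBlocks_apply₂₂,
    warped_lr, warped_rl, warped_rr, pd_zero, pd_rr_l f _ (H.hF _ _) H.hf, Matrix.zero_apply,
    zero_mul, Finset.sum_const_zero, add_zero, zero_add, sub_zero, Matrix.smul_apply, smul_eq_mul]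
  rw [← ginv_mul_F H, Finset.mul_sum, Finset.mul_sum]
  have := H.f0 (basePt x)
  exact Finset.sum_congr rfl fun b _ => by field_simp

lemma Γ_rrl (H : WD gB gF f) (i b j) (x : (Fin d₁ ⊕ Fin d₂) → ℝ) :
    Γc (warped gB gF f) (Sum.inr i) (Sum.inr j) (Sum.inl b) x
      = (f (basePt x))⁻¹ * pd f b (basePt x) * if i = j then 1 else 0 := by
  unfold Γc
  rw [warped_ginv gB gF f x (H.dB _) (H.dF _) (H.f0 _)]
  simp only [Fintype.sum_sum_type, Matrix.fromBlocks_apply₂₁, Matrix.fromBlocks_apply₂₂,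
    warped_lr, warped_rl, warped_rr, pd_zero, pd_rr_l f _ (H.hF _ _) H.hf, Matrix.zero_apply,
    zero_mul, Finset.sum_const_zero, add_zero, zero_add, sub_zero, Matrix.smul_apply, smul_eq_mul]
  rw [← ginv_mul_F H, Finset.mul_sum, Finset.mul_sum]
  have := H.f0 (basePt x)
  exact Finset.sum_congr rfl fun b _ => by field_simp

lemma Γ_rrr (H : WD gB gF f) (i j k) (x : (Fin d₁ ⊕ Fin d₂) → ℝ) :
    Γc (warped gB gF f) (Sum.inr i) (Sum.inr j) (Sum.inr k) x = Γc gF i j k (fibPt x) := by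
  unfold Γc
  rw [warped_ginv gB gF f x (H.dB _) (H.dF _) (H.f0 _)]
  simp only [Fintype.sum_sum_type, Matrix.fromBlocks_apply₂₁, Matrix.fromBlocks_apply₂₂,
    warped_rr, pd_rr_r f _ (H.hF _ _) H.hf, Matrix.zero_apply,
    zero_mul, Finset.sum_const_zero, zero_add, Matrix.smul_apply, smul_eq_mul]
  have := H.f0 (basePt x)
  congr 1
  exact Finset.sum_congr rfl fun b _ => by field_simp

/-- fiber component of the covariant derivative -/
lemma covD_r (H : WD gB gF f) (γ V : ℝ → (Fin d₁ ⊕ Fin d₂) → ℝ) (u : ℝ) (i : Fin d₂) :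
    covD (warped gB gF f) γ V u (Sum.inr i) = covD gF (fibCurve γ) (fibCurve V) u i
      + (f (baseCurve γ u))⁻¹ * (∑ a, pd f a (baseCurve γ u) * vel (baseCurve γ) u a) * V u (Sum.inr i)
      + (f (baseCurve γ u))⁻¹ * (∑ a, pd f a (baseCurve γ u) * V u (Sum.inl a))
        * vel (fibCurve γ) u i := by
  unfold covD
  simp only [Fintype.sum_sum_type, Γ_rll H, Γ_rlr H, Γ_rrl H, Γ_rrr H, zero_mul,
    Finset.sum_const_zero, zero_add, mul_ite, mul_one, mul_zero, ite_mul, Finset.sum_add_distrib,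
    Finset.sum_ite_eq, Finset.mem_univ, if_true]
  rw [Finset.sum_comm (s := (Finset.univ : Finset (Fin d₂)))
    (t := (Finset.univ : Finset (Fin d₁)))]
  simp only [Finset.sum_ite_eq, Finset.mem_univ, if_true]
  have e1 : ∑ a, (f (basePt (γ u)))⁻¹ * pd f a (basePt (γ u)) * vel γ u (Sum.inl a) * V u (Sum.inr i)
     = (f (baseCurve γ u))⁻¹ * (∑ a, pd f a (baseCurve γ u) * vel (baseCurve γ) u a) * V u (Sum.inr i) := by
    rw [Finset.mul_sum, Finset.sum_mul]
    exact Finset.sum_congr rfl fun a _ => by simp only [baseCurve, vel, basePt]; ring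
  have e2 : ∑ a, (f (basePt (γ u)))⁻¹ * pd f a (basePt (γ u)) * vel γ u (Sum.inr i) * V u (Sum.inl a)
     = (f (baseCurve γ u))⁻¹ * (∑ a, pd f a (baseCurve γ u) * V u (Sum.inl a))
        * vel (fibCurve γ) u i := by
    rw [Finset.mul_sum, Finset.sum_mul]
    exact Finset.sum_congr rfl fun a _ => by simp only [baseCurve, fibCurve, vel, fibPt]; ring
  rw [e1, e2]
  simp only [fibCurve, vel, fibPt]
  ring

/-- base component of the covariant derivative -/
lemma covD_l (H : WD gB gF f) (γ V : ℝ → (Fin d₁ ⊕ Fin d₂) → ℝ) (u : ℝ) (a : Fin d₁) :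
    covD (warped gB gF f) γ V u (Sum.inl a) = covD gB (baseCurve γ) (baseCurve V) u a
      - f (baseCurve γ u) * gradVec gB f (baseCurve γ u) a *
        sq gF (fibCurve γ u) (vel (fibCurve γ) u) (fibCurve V u) := by
  unfold covD sq
  simp only [Fintype.sum_sum_type, Γ_lll H, Γ_llr H, Γ_lrl H, Γ_lrr H, zero_mul,
    Finset.sum_const_zero, zero_add, add_zero, Finset.sum_add_distrib]
  have e2 : ∑ j, ∑ k, -(f (basePt (γ u)) * gradVec gB f (basePt (γ u)) a) * gF (fibPt (γ u)) j k
      * vel γ u (Sum.inr j) * V u (Sum.inr k) = 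
      - (f (baseCurve γ u) * gradVec gB f (baseCurve γ u) a *
        ∑ μ, ∑ ν, gF (fibCurve γ u) μ ν * vel (fibCurve γ) u μ * fibCurve V u ν) := by
    rw [Finset.mul_sum, ← Finset.sum_neg_distrib]
    refine Finset.sum_congr rfl fun j _ => ?_
    rw [Finset.mul_sum, ← Finset.sum_neg_distrib]
    refine Finset.sum_congr rfl fun k _ => ?_
    simp only [baseCurve, fibCurve, vel, fibPt]; ring
  rw [e2]
  simp only [baseCurve, vel, basePt]
  ring

lemma sq_warped (x v w : (Fin d₁ ⊕ Fin d₂) → ℝ) :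
    sq (warped gB gF f) x v w = sq gB (basePt x) (basePt v) (basePt w)
      + (f (basePt x))^2 * sq gF (fibPt x) (fibPt v) (fibPt w) := by
  unfold sq
  simp only [Fintype.sum_sum_type, warped_ll, warped_lr, warped_rl, warped_rr, zero_mul,
    Finset.sum_const_zero, add_zero, zero_add, Finset.mul_sum]
  congr 1
  refine Finset.sum_congr rfl fun j _ => Finset.sum_congr rfl fun k _ => ?_
  simp only [fibPt]; ring

end w

lemma linear_zero {n : ℕ} (A : ℝ → Fin n → Fin n → ℝ) (hA : ∀ a b, Continuous fun u => A u a b)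
    (X : ℝ → Fin n → ℝ) (h0 : ∀ a, X 0 a = 0)
    (hX : ∀ u a, HasDerivAt (fun w => X w a) (∑ b, A u a b * X u b) u) :
    ∀ u a, X u a = 0 := by
  intro u a
  have hc : Continuous fun t => (∑ a, ∑ b, |A t a b|) := by fun_prop
  obtain ⟨K, hK⟩ := (isCompact_Icc (a := -(|u|+1)) (b := |u|+1)).bddAbove_image hc.continuousOn
  have hK' : ∀ t ∈ Set.Ioo (-(|u|+1)) (|u|+1), ∑ a, ∑ b, |A t a b| ≤ K := fun t ht =>
    hK ⟨t, Set.Ioo_subset_Icc_self ht, rfl⟩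
  have := ODE_solution_unique_of_mem_Ioo (v := fun t (x : Fin n → ℝ) => fun a => ∑ b, A t a b * x b)
    (s := fun _ => Set.univ) (K := K.toNNReal) (f := X) (g := fun _ => 0) (t₀ := 0)
    (a := -(|u|+1)) (b := |u|+1) ?_ ?_ ?_ ?_ ?_
  · exact congrFun (this (x := u) ⟨by linarith [neg_abs_le u], by linarith [le_abs_self u]⟩) a
  · intro t ht
    refine (LipschitzWith.of_dist_le_mul fun x y => ?_).lipschitzOnWith
    have hK2 := hK' t ht
    have hK0 : 0 ≤ K := le_trans (by positivity) hK2
    rw [Real.coe_toNNReal _ hK0]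
    refine (dist_pi_le_iff (by positivity)).2 fun a => ?_
    rw [Real.dist_eq, ← Finset.sum_sub_distrib]
    calc |∑ b, (A t a b * x b - A t a b * y b)| ≤ ∑ b, |A t a b| * dist x y := by
          refine (Finset.abs_sum_le_sum_abs _ _).trans (Finset.sum_le_sum fun b _ => ?_)
          rw [← mul_sub, abs_mul]
          gcongr
          rw [← Real.dist_eq]; exact dist_le_pi_dist x y b
      _ = (∑ b, |A t a b|) * dist x y := by rw [Finset.sum_mul]
      _ ≤ K * dist x y := by
          gcongr
          refine le_trans ?_ hK2
          exact Finset.single_le_sum (f := fun a => ∑ b, |A t a b|)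
            (fun i _ => by positivity) (Finset.mem_univ a)
  · constructor <;> linarith [abs_nonneg u]
  · intro t _
    exact ⟨hasDerivAt_pi.2 fun a => hX t a, trivial⟩
  · intro t _
    refine ⟨?_, trivial⟩
    have := hasDerivAt_const t (0 : Fin n → ℝ)
    convert this using 1
    ext a; simp
  · ext a; exact h0 a

lemma pd_cont {n : ℕ} (φ : (Fin n → ℝ) → ℝ) (h : ContDiff ℝ (⊤ : ℕ∞) φ) (c : Fin n) :
    ContDiff ℝ (⊤ : ℕ∞) (pd φ c) := by
  unfold pd
  exact (h.fderiv_right (m := (⊤ : ℕ∞)) (by simp)).clm_apply contDiff_const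

lemma ginv_cont {n : ℕ} (g : (Fin n → ℝ) → Matrix (Fin n) (Fin n) ℝ) (h : SmoothMetric g)
    (a b) : Continuous fun x => ginv g x a b := by
  have hc : Continuous g := continuous_matrix fun i j => (h.1 i j).continuous
  unfold ginv
  simp only [Matrix.inv_def, Matrix.smul_apply, Ring.inverse_eq_inv', smul_eq_mul]
  exact (hc.matrix_det.inv₀ fun x => (h.2.2 x).ne_zero).mul (hc.matrix_adjugate.matrix_elem a b)

lemma Γ_cont {n : ℕ} (g : (Fin n → ℝ) → Matrix (Fin n) (Fin n) ℝ) (h : SmoothMetric g)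
    (a b c) : Continuous fun x => Γc g a b c x := by
  unfold Γc
  refine continuous_const.mul (continuous_finsetSum _ fun k _ => (ginv_cont g h _ _).mul ?_)
  exact ((pd_cont _ (h.1 _ _) _).continuous.add (pd_cont _ (h.1 _ _) _).continuous).sub
    (pd_cont _ (h.1 _ _) _).continuous

/-- Along an affinely parametrized geodesic of a warped product,
the fiber component of a parallelly transported field `E` with `E(0)` orthogonal to
`N(0)` is `Ē^i = f h N̄^i + f⁻¹ Ē^i_∥`, where `Ē_∥` is the ḡ-parallel transport of
`f(0) ē` along the fiber projection and `h` solves `dh/du = Ê^a ∂_a(1/f)`, `h(0)=0`.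
If moreover the base component of `E(0)` vanishes, then `E = (0, Ē_∥/f)`. -/
theorem fiber_component_of_parallel_transport {d₁ d₂ : ℕ}
    (gB : (Fin d₁ → ℝ) → Matrix (Fin d₁) (Fin d₁) ℝ)
    (gF : (Fin d₂ → ℝ) → Matrix (Fin d₂) (Fin d₂) ℝ)
    (f : (Fin d₁ → ℝ) → ℝ)
    (hB : SmoothMetric gB) (hF : SmoothMetric gF)
    (hf : ContDiff ℝ (⊤ : ℕ∞) f) (hfpos : ∀ y, 0 < f y)
    (γ : ℝ → (Fin d₁ ⊕ Fin d₂) → ℝ) (hγs : SmoothCurve γ)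
    (hgeo : IsGeodesic (warped gB gF f) γ)
    (E : ℝ → (Fin d₁ ⊕ Fin d₂) → ℝ) (hEs : SmoothCurve E)
    (hE : IsParallel (warped gB gF f) γ E)
    (horth : sq (warped gB gF f) (γ 0) (vel γ 0) (E 0) = 0) :
    ∃ (EF : ℝ → Fin d₂ → ℝ) (h : ℝ → ℝ),
      SmoothCurve EF ∧
      (∀ (u : ℝ) (i : Fin d₂),
        deriv (fun w => EF w i) u
            + ∑ j, ∑ k, Γc gF i j k (fibPt (γ u)) * vel (fibCurve γ) u j * EF u k = 0) ∧
      (∀ i, EF 0 i = f (basePt (γ 0)) * E 0 (Sum.inr i)) ∧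
      h 0 = 0 ∧
      (∀ u, HasDerivAt h
        (∑ a, E u (Sum.inl a) * pd (fun y => (f y)⁻¹) a (basePt (γ u))) u) ∧
      (∀ (u : ℝ) (i : Fin d₂),
        E u (Sum.inr i)
          = f (basePt (γ u)) * h u * vel (fibCurve γ) u i
            + (f (basePt (γ u)))⁻¹ * EF u i) ∧
      ((∀ a, E 0 (Sum.inl a) = 0) →
        ∀ u : ℝ, (∀ a, E u (Sum.inl a) = 0) ∧
          ∀ i, E u (Sum.inr i) = (f (basePt (γ u)))⁻¹ * EF u i) := by
  have H : WD gB gF f :=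
    ⟨fun μ ν => (hB.1 μ ν).differentiable (by simp), fun μ ν => (hF.1 μ ν).differentiable (by simp),
      hF.2.1, hf.differentiable (by simp), hB.2.2, hF.2.2, fun x => (hfpos x).ne'⟩
  have hvs : SmoothCurve (vel γ) := fun μ => (contDiff_infty_iff_deriv.1 (hγs μ)).2
  have dγ : ∀ μ u, DifferentiableAt ℝ (fun w => γ w μ) u := fun μ u =>
    (hγs μ).differentiable (by simp) u
  have dE : ∀ μ u, DifferentiableAt ℝ (fun w => E w μ) u := fun μ u =>
    (hEs μ).differentiable (by simp) u
  have dv : ∀ μ u, DifferentiableAt ℝ (fun w => vel γ w μ) u := fun μ u =>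
    (hvs μ).differentiable (by simp) u
  have sB : ContDiff ℝ (⊤ : ℕ∞) (baseCurve γ) := contDiff_pi.2 fun a => hγs (Sum.inl a)
  have sFc : ContDiff ℝ (⊤ : ℕ∞) (fun u => f (baseCurve γ u)) := hf.comp sB
  have F0 : ∀ u, f (baseCurve γ u) ≠ 0 := fun u => (hfpos _).ne'
  have pinv : ∀ a y, pd (fun y => (f y)⁻¹) a y = - pd f a y / (f y)^2 := by
    intro a y
    have h1 := ((hasDerivAt_inv (H.f0 y)).comp_hasFDerivAt y (H.hf y).hasFDerivAt).fderiv
    simp only [pd]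
    rw [show (fun y => (f y)⁻¹) = Inv.inv ∘ f from rfl, h1]
    simp
    ring
  set p : ℝ → ℝ := fun u => ∑ a, E u (Sum.inl a) * pd (fun y => (f y)⁻¹) a (basePt (γ u)) with hp
  have ps : ContDiff ℝ (⊤ : ℕ∞) p := by
    refine ContDiff.sum fun a _ => (hEs _).mul ?_
    exact (pd_cont _ (hf.inv H.f0) a).comp sB
  set h : ℝ → ℝ := fun u => ∫ t in (0:ℝ)..u, p t with hh
  have hd : ∀ u, HasDerivAt h (p u) u := fun u =>
    (ps.continuous.integral_hasStrictDerivAt 0 u).hasDerivAt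
  have hs : ContDiff ℝ (⊤ : ℕ∞) h := by
    refine contDiff_infty_iff_deriv.2 ⟨fun u => (hd u).differentiableAt, ?_⟩
    rw [show deriv h = p from funext fun u => (hd u).deriv]; exact ps
  have pP : ∀ u, p u = - (∑ a, pd f a (baseCurve γ u) * E u (Sum.inl a)) / (f (baseCurve γ u))^2 := by
    intro u
    rw [← Finset.sum_neg_distrib, Finset.sum_div]
    exact Finset.sum_congr rfl fun a _ => by rw [pinv]; simp only [baseCurve]; ring
  have hform : ∀ (u : ℝ) (i : Fin d₂), E u (Sum.inr i)
          = f (basePt (γ u)) * h u * vel (fibCurve γ) u i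
            + (f (basePt (γ u)))⁻¹ * (f (baseCurve γ u) * E u (Sum.inr i)
              - (f (baseCurve γ u))^2 * h u * vel (fibCurve γ) u i) := by
    intro u i
    have := F0 u
    simp only [baseCurve] at this ⊢
    field_simp
    ring
  refine ⟨fun u i => f (baseCurve γ u) * E u (Sum.inr i)
      - (f (baseCurve γ u))^2 * h u * vel (fibCurve γ) u i, h, ?_, ?_, ?_, ?_, hd, hform, ?_⟩
  · intro i
    exact (sFc.mul (hEs _)).sub (((sFc.pow 2).mul hs).mul (hvs (Sum.inr i)))
  · intro u i
    have hFd := hasDerivAt_comp_pd f (baseCurve γ) u (H.hf _) (fun a => dγ (Sum.inl a) u)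
    have e1 := hE u (Sum.inr i)
    have e2 := hgeo u (Sum.inr i)
    rw [covD_r H] at e1 e2
    have d1 := ((hFd.fun_mul (dE (Sum.inr i) u).hasDerivAt).fun_sub
      (((hFd.fun_pow 2).fun_mul (hd u)).fun_mul (dv (Sum.inr i) u).hasDerivAt)).deriv
    change deriv (fun w => f (baseCurve γ w) * E w (Sum.inr i)
      - (f (baseCurve γ w))^2 * h w * vel γ w (Sum.inr i)) u + _ = 0
    rw [d1, pP]
    have lin : ∑ j, ∑ k, Γc gF i j k (fibPt (γ u)) * vel (fibCurve γ) u j *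
        (f (baseCurve γ u) * E u (Sum.inr k) - (f (baseCurve γ u))^2 * h u * vel (fibCurve γ) u k)
        = f (baseCurve γ u) * (∑ j, ∑ k, Γc gF i j k (fibCurve γ u) * vel (fibCurve γ) u j *
          fibCurve E u k) - (f (baseCurve γ u))^2 * h u *
          (∑ j, ∑ k, Γc gF i j k (fibCurve γ u) * vel (fibCurve γ) u j *
          fibCurve (vel γ) u k) := by
      simp only [Finset.mul_sum, ← Finset.sum_sub_distrib]
      refine Finset.sum_congr rfl fun j _ => Finset.sum_congr rfl fun k _ => ?_
      change Γc gF i j k (fibPt (γ u)) * vel γ u (Sum.inr j) *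
        (f (baseCurve γ u) * E u (Sum.inr k) - (f (baseCurve γ u))^2 * h u * vel γ u (Sum.inr k)) =
        f (baseCurve γ u) * (Γc gF i j k (fibPt (γ u)) * vel γ u (Sum.inr j) * E u (Sum.inr k)) -
        (f (baseCurve γ u))^2 * h u * (Γc gF i j k (fibPt (γ u)) * vel γ u (Sum.inr j) *
          vel γ u (Sum.inr k))
      ring
    rw [lin]
    unfold covD at e1 e2
    change deriv (fun w => E w (Sum.inr i)) u + _ + _ + _ * vel γ u (Sum.inr i) = 0 at e1
    change deriv (fun w => vel γ w (Sum.inr i)) u + _ + _ +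
      _ * (∑ a, pd f a (baseCurve γ u) * vel (baseCurve γ) u a) * vel γ u (Sum.inr i) = 0 at e2
    generalize (∑ j, ∑ k, Γc gF i j k (fibCurve γ u) * vel (fibCurve γ) u j *
          fibCurve E u k) = SE at *
    generalize (∑ j, ∑ k, Γc gF i j k (fibCurve γ u) * vel (fibCurve γ) u j *
          fibCurve (vel γ) u k) = SN at *
    generalize (∑ a, pd f a (baseCurve γ u) * vel (baseCurve γ) u a) = F' at *
    generalize (∑ a, pd f a (baseCurve γ u) * E u (Sum.inl a)) = P at *
    have f0 := F0 u
    generalize f (baseCurve γ u) = F at *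
    generalize deriv (fun w => E w (Sum.inr i)) u = E' at *
    generalize deriv (fun w => vel γ w (Sum.inr i)) u = N' at *
    generalize vel γ u (Sum.inr i) = N at *
    have e1' : E' = -(SE + F⁻¹ * F' * E u (Sum.inr i) + F⁻¹ * P * N) := by linarith
    have e2' : N' = -(SN + F⁻¹ * F' * N + F⁻¹ * F' * N) := by linarith
    rw [e1', e2']
    field_simp
    ring
  · intro i
    simp [hh, baseCurve]
  · simp [hh]
  · intro h0
    have hort : ∀ u, sq (warped gB gF f) (γ u) (vel γ u) (E u) = 0 := by
      intro u
      have hdz : ∀ u, HasDerivAt (fun w => sq (warped gB gF f) (γ w) (vel γ w) (E w)) 0 u := by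
        intro u
        refine sq_deriv (warped gB gF f) ?_ ?_ (fun x => warped_det gB gF f x (H.dB _) (H.dF _) (H.f0 _))
          γ (vel γ) E u (fun μ => dγ μ u) (fun μ => dv μ u) (fun μ => dE μ u) (hgeo u) (hE u)
        · rintro (a|a) (b|b)
          · exact fun x => (hasF_base (fun y => gB y a b) x (H.hB a b _)).differentiableAt
          · exact differentiable_const 0
          · exact differentiable_const 0
          · exact fun x => (HasFDerivAt.fun_mul (HasFDerivAt.pow (hasF_base f x (H.hf _)) 2)
              (hasF_fib (fun y => gF y a b) x (H.hF a b _))).differentiableAt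
        · rintro x (a|a) (b|b)
          · exact hB.2.1 _ a b
          · rfl
          · rfl
          · rw [warped_rr, warped_rr, hF.2.1]
      rw [← horth]
      exact is_const_of_deriv_eq_zero (fun u => (hdz u).differentiableAt)
        (fun u => (hdz u).deriv) u 0
    have hz : ∀ u a, E u (Sum.inl a) = 0 := by
      refine linear_zero (fun u a c => -(∑ b, Γc gB a b c (baseCurve γ u) * vel γ u (Sum.inl b))
        - (f (baseCurve γ u))⁻¹ * gradVec gB f (baseCurve γ u) a *
          ∑ b, gB (baseCurve γ u) b c * vel γ u (Sum.inl b)) ?_ (fun u a => E u (Sum.inl a)) h0 ?_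
      · intro a c
        refine Continuous.sub (continuous_finsetSum _ fun b _ => ?_).neg (Continuous.mul
          (Continuous.mul (sFc.continuous.inv₀ F0) ?_) (continuous_finsetSum _ fun b _ => ?_))
        · exact ((Γ_cont gB hB a b c).comp sB.continuous).mul (hvs _).continuous
        · unfold gradVec
          exact continuous_finsetSum _ fun b _ => ((ginv_cont gB hB a b).comp sB.continuous).mul
            ((pd_cont f hf b).continuous.comp sB.continuous)
        · exact ((hB.1 b c).continuous.comp sB.continuous).mul (hvs _).continuous
      · intro u a
        refine HasDerivAt.congr_deriv (dE (Sum.inl a) u).hasDerivAt (Eq.symm ?_)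
        have e1 := hE u (Sum.inl a)
        rw [covD_l H] at e1
        have o := hort u
        rw [sq_warped] at o
        unfold covD at e1
        change deriv (fun w => E w (Sum.inl a)) u + _ - _ = 0 at e1
        change sq gB (baseCurve γ u) (vel (baseCurve γ) u) (baseCurve E u) + (f (baseCurve γ u))^2 *
          sq gF (fibCurve γ u) (vel (fibCurve γ) u) (fibCurve E u) = 0 at o
        have split : ∑ c, (-(∑ b, Γc gB a b c (baseCurve γ u) * vel γ u (Sum.inl b))
            - (f (baseCurve γ u))⁻¹ * gradVec gB f (baseCurve γ u) a *
              ∑ b, gB (baseCurve γ u) b c * vel γ u (Sum.inl b)) * E u (Sum.inl c)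
            = - (∑ ρ, ∑ σ, Γc gB a ρ σ (baseCurve γ u) * vel (baseCurve γ) u ρ * baseCurve E u σ)
              - (f (baseCurve γ u))⁻¹ * gradVec gB f (baseCurve γ u) a *
              sq gB (baseCurve γ u) (vel (baseCurve γ) u) (baseCurve E u) := by
          unfold sq
          rw [Finset.sum_comm (f := fun ρ σ => Γc gB a ρ σ (baseCurve γ u) *
            vel (baseCurve γ) u ρ * baseCurve E u σ), Finset.sum_comm (f := fun ρ σ =>
            gB (baseCurve γ u) ρ σ * vel (baseCurve γ) u ρ * baseCurve E u σ),
            Finset.mul_sum, ← Finset.sum_neg_distrib, ← Finset.sum_sub_distrib]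
          refine Finset.sum_congr rfl fun c _ => ?_
          rw [← Finset.sum_mul, ← Finset.sum_mul]
          change _ = -((∑ b, Γc gB a b c (baseCurve γ u) * vel γ u (Sum.inl b)) * E u (Sum.inl c))
            - (f (baseCurve γ u))⁻¹ * gradVec gB f (baseCurve γ u) a *
              ((∑ b, gB (baseCurve γ u) b c * vel γ u (Sum.inl b)) * E u (Sum.inl c))
          ring
        refine Eq.trans split ?_
        have f0 := F0 u
        generalize sq gB (baseCurve γ u) (vel (baseCurve γ) u) (baseCurve E u) = QB at *
        generalize sq gF (fibCurve γ u) (vel (fibCurve γ) u) (fibCurve E u) = QF at *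
        have : QB = -((f (baseCurve γ u))^2 * QF) := by linarith
        rw [this]
        have : (f (baseCurve γ u))⁻¹ * gradVec gB f (baseCurve γ u) a *
          -((f (baseCurve γ u))^2 * QF) = -(f (baseCurve γ u) * gradVec gB f (baseCurve γ u) a * QF) := by
          field_simp
        rw [this]
        linarith
    intro u
    refine ⟨hz u, fun i => ?_⟩
    have hu : h u = 0 := by
      have : p = fun _ => 0 := by
        funext t; simp [hp, hz]
      simp [hh, this]
    conv_lhs => rw [hform u i]
    simp [hu]

end Paper
end
end

section
/- Let ζ be a spacelike submanifold of co-dimension m = 2 in a spacetime (M,g), with future-pointing null normals n^μ and ℓ^μ at q ∈ ζ, γ the null geodesic with initial tangent n, N its tangent field, L the parallel propagation of ℓ along γ, and P^{μν} the parallel propagation along γ of the projector onto ζ. Then P^{μν} = g^{μν} − (N_ρ L^ρ)⁻¹ ( N^μ L^ν + N^ν L^μ ) along γ, and consequently the curvature condition R_{μνρσ} N^μ N^ρ P^{νσ} ≥ 0 along γ is equivalent to the null convergence condition R_{μν} N^μ N^ν ≥ 0 along γ. -/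
open Filter MeasureTheory
open scoped BigOperators Topology

noncomputable section

namespace Paper

variable {ι : Type*} [Fintype ι] [DecidableEq ι]
variable {κ : Type*} [Fintype κ] [DecidableEq κ]

/-- Lowered Christoffel symbols. -/
def ΓL (g : (ι → ℝ) → Matrix ι ι ℝ) (μ ρ σ : ι) (x : ι → ℝ) : ℝ :=
  (1 / 2) * (pd (fun y => g y μ σ) ρ x + pd (fun y => g y μ ρ) σ x - pd (fun y => g y ρ σ) μ x)

lemma ginv_contDiff {g : (ι → ℝ) → Matrix ι ι ℝ} (hg : SmoothMetric g) (μ ν : ι) :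
    ContDiff ℝ (⊤ : ℕ∞) fun x => ginv g x μ ν := by
  have hdet : ∀ h : (ι → ℝ) → Matrix ι ι ℝ, (∀ μ ν, ContDiff ℝ (⊤ : ℕ∞) fun x => h x μ ν) →
      ContDiff ℝ (⊤ : ℕ∞) fun x => (h x).det := by
    intro h hh
    simp only [Matrix.det_apply']
    apply ContDiff.sum
    intro s _
    apply ContDiff.mul contDiff_const
    apply contDiff_prod
    intro i _
    exact hh _ _
  have e : (fun x => ginv g x μ ν) =
      fun x => ((g x).det)⁻¹ * ((g x).updateRow ν (Pi.single μ 1)).det := by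
    funext x
    simp [ginv, Matrix.inv_def, Matrix.adjugate_apply, Ring.inverse_eq_inv']
  rw [e]
  apply ContDiff.mul
  · exact (hdet g hg.1).inv (fun x => (hg.2.2 x).ne_zero)
  · apply hdet
    intro a b
    by_cases h : a = ν
    · subst h
      simp only [Matrix.updateRow_self]
      exact contDiff_const
    · simp only [Matrix.updateRow_ne h]
      exact hg.1 a b

lemma pd_contDiff {h : (ι → ℝ) → ℝ} (hh : ContDiff ℝ (⊤ : ℕ∞) h) (ρ : ι) :
    ContDiff ℝ (⊤ : ℕ∞) (pd h ρ) := by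
  unfold pd
  exact (hh.fderiv_right (m := ((⊤ : ℕ∞) : WithTop ℕ∞)) (by simp)).clm_apply contDiff_const

lemma pd_comm {h : (ι → ℝ) → ℝ} (hh : ContDiff ℝ (⊤ : ℕ∞) h) (ρ σ : ι) (x : ι → ℝ) :
    pd (pd h ρ) σ x = pd (pd h σ) ρ x := by
  have hd : DifferentiableAt ℝ (fderiv ℝ h) x :=
    ((hh.fderiv_right (m := ((⊤ : ℕ∞) : WithTop ℕ∞)) (by simp)).differentiable (by simp)) x
  have hs : IsSymmSndFDerivAt ℝ h x := by
    apply hh.contDiffAt.isSymmSndFDerivAt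
    simp only [minSmoothness_of_isRCLikeNormedField]
    exact WithTop.coe_le_coe.2 (le_top : (2 : ℕ∞) ≤ ⊤)
  have key : ∀ a b : ι, pd (pd h a) b x
      = fderiv ℝ (fderiv ℝ h) x (Pi.single b 1) (Pi.single a 1) := by
    intro a b
    show fderiv ℝ (fun y => fderiv ℝ h y (Pi.single a 1)) x (Pi.single b 1) = _
    rw [fderiv_clm_apply hd (differentiableAt_const _)]
    simp
  rw [key, key]
  exact hs _ _

lemma ΓL_contDiff {g : (ι → ℝ) → Matrix ι ι ℝ} (hg : SmoothMetric g) (μ ρ σ : ι) :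
    ContDiff ℝ (⊤ : ℕ∞) (ΓL g μ ρ σ) := by
  unfold ΓL
  exact contDiff_const.mul (((pd_contDiff (hg.1 _ _) _).add (pd_contDiff (hg.1 _ _) _)).sub
    (pd_contDiff (hg.1 _ _) _))

lemma Γc_eq (g : (ι → ℝ) → Matrix ι ι ℝ) (μ ρ σ : ι) :
    Γc g μ ρ σ = fun x => ∑ ν, ginv g x μ ν * ΓL g ν ρ σ x := by
  funext x
  unfold Γc ΓL
  rw [Finset.mul_sum]
  exact Finset.sum_congr rfl fun ν _ => by ring

lemma Γc_contDiff {g : (ι → ℝ) → Matrix ι ι ℝ} (hg : SmoothMetric g) (μ ρ σ : ι) :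
    ContDiff ℝ (⊤ : ℕ∞) (Γc g μ ρ σ) := by
  rw [Γc_eq]
  exact ContDiff.sum fun ν _ => (ginv_contDiff hg _ _).mul (ΓL_contDiff hg _ _ _)

lemma g_mul_ginv {g : (ι → ℝ) → Matrix ι ι ℝ} (hg : SmoothMetric g) (x : ι → ℝ) (μ ν : ι) :
    ∑ l, g x μ l * ginv g x l ν = if μ = ν then 1 else 0 := by
  have := congrFun (congrFun (Matrix.mul_nonsing_inv (g x) (hg.2.2 x)) μ) ν
  simpa [Matrix.mul_apply, Matrix.one_apply, ginv] using this

lemma ginv_mul_g {g : (ι → ℝ) → Matrix ι ι ℝ} (hg : SmoothMetric g) (x : ι → ℝ) (μ ν : ι) :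
    ∑ l, ginv g x μ l * g x l ν = if μ = ν then 1 else 0 := by
  have := congrFun (congrFun (Matrix.nonsing_inv_mul (g x) (hg.2.2 x)) μ) ν
  simpa [Matrix.mul_apply, Matrix.one_apply, ginv] using this

lemma ΓL_eq {g : (ι → ℝ) → Matrix ι ι ℝ} (hg : SmoothMetric g) (μ ρ σ : ι) (x : ι → ℝ) :
    ∑ l, g x μ l * Γc g l ρ σ x = ΓL g μ ρ σ x := by
  simp only [Γc_eq, Finset.mul_sum]
  rw [Finset.sum_comm]
  simp only [← mul_assoc, ← Finset.sum_mul, g_mul_ginv hg]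
  simp

lemma pd_g {g : (ι → ℝ) → Matrix ι ι ℝ} (hg : SmoothMetric g) (μ ρ σ : ι) (x : ι → ℝ) :
    pd (fun y => g y μ σ) ρ x = ΓL g μ ρ σ x + ΓL g σ ρ μ x := by
  have s : ∀ a b, (fun y => g y a b) = fun y => g y b a := fun a b => by
    funext y; exact hg.2.1 y a b
  unfold ΓL
  rw [s σ μ, s σ ρ, s ρ μ]
  ring

lemma pd_sum_mul {a b : ι → (ι → ℝ) → ℝ} (ha : ∀ i, ContDiff ℝ (⊤ : ℕ∞) (a i))
    (hb : ∀ i, ContDiff ℝ (⊤ : ℕ∞) (b i)) (ρ : ι) (x : ι → ℝ) :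
    pd (fun y => ∑ i, a i y * b i y) ρ x = ∑ i, (pd (a i) ρ x * b i x + a i x * pd (b i) ρ x) := by
  have da : ∀ i, DifferentiableAt ℝ (a i) x := fun i => (ha i).differentiable (by simp) x
  have db : ∀ i, DifferentiableAt ℝ (b i) x := fun i => (hb i).differentiable (by simp) x
  unfold pd
  rw [fderiv_fun_sum fun i _ => (da i).fun_mul (db i)]
  rw [ContinuousLinearMap.sum_apply]
  refine Finset.sum_congr rfl fun i _ => ?_
  rw [fderiv_fun_mul (da i) (db i)]
  simp
  ring

lemma g_pd_Γ {g : (ι → ℝ) → Matrix ι ι ℝ} (hg : SmoothMetric g) (α β μ ν : ι) (x : ι → ℝ) :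
    ∑ l, g x α l * pd (Γc g l ν β) μ x = pd (ΓL g α ν β) μ x
      - ∑ l, ΓL g α μ l x * Γc g l ν β x - ∑ l, ΓL g l μ α x * Γc g l ν β x := by
  have h := pd_sum_mul (fun l => hg.1 α l) (fun l => Γc_contDiff hg l ν β) μ x
  have e : (fun y => ∑ l, g y α l * Γc g l ν β y) = ΓL g α ν β := by
    funext y; exact ΓL_eq hg _ _ _ _
  rw [e] at h
  rw [h, ← Finset.sum_sub_distrib, ← Finset.sum_sub_distrib]
  refine Finset.sum_congr rfl fun l _ => ?_
  rw [pd_g hg]; ring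

lemma RiemLow_eq {g : (ι → ℝ) → Matrix ι ι ℝ} (hg : SmoothMetric g) (α β μ ν : ι) (x : ι → ℝ) :
    RiemLow g α β μ ν x = pd (ΓL g α ν β) μ x - pd (ΓL g α μ β) ν x
      - ∑ l, ΓL g l μ α x * Γc g l ν β x + ∑ l, ΓL g l ν α x * Γc g l μ β x := by
  have q : ∀ μ ν, ∑ k, g x α k * ∑ l, Γc g k μ l x * Γc g l ν β x
      = ∑ l, ΓL g α μ l x * Γc g l ν β x := by
    intro μ ν
    simp only [Finset.mul_sum]
    rw [Finset.sum_comm]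
    simp only [← mul_assoc, ← Finset.sum_mul, ΓL_eq hg]
  unfold RiemLow Riem
  simp only [mul_sub, mul_add, Finset.sum_sub_distrib, Finset.sum_add_distrib, q, g_pd_Γ hg]
  ring

lemma ΓΓ_symm {g : (ι → ℝ) → Matrix ι ι ℝ} (hg : SmoothMetric g) (α β μ ν : ι) (x : ι → ℝ) :
    ∑ l, ΓL g l μ α x * Γc g l ν β x = ∑ l, ΓL g l ν β x * Γc g l μ α x := by
  simp only [← ΓL_eq hg, Finset.sum_mul]
  rw [Finset.sum_comm]
  refine Finset.sum_congr rfl fun k _ => Finset.sum_congr rfl fun l _ => ?_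
  rw [hg.2.1 x l k]; ring

lemma Riem_anti2 (g : (ι → ℝ) → Matrix ι ι ℝ) (α β μ ν : ι) (x : ι → ℝ) :
    RiemLow g α β μ ν x = - RiemLow g α β ν μ x := by
  unfold RiemLow Riem
  rw [← Finset.sum_neg_distrib]
  exact Finset.sum_congr rfl fun l _ => by ring

lemma Riem_anti1 {g : (ι → ℝ) → Matrix ι ι ℝ} (hg : SmoothMetric g) (α β μ ν : ι) (x : ι → ℝ) :
    RiemLow g α β μ ν x = - RiemLow g β α μ ν x := by
  have k : ∀ μ ν, pd (ΓL g α ν β) μ x + pd (ΓL g β ν α) μ x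
      = pd (pd (fun y => g y α β) ν) μ x := by
    intro μ ν
    have e : pd (fun y => g y α β) ν = fun y => ΓL g α ν β y + ΓL g β ν α y := by
      funext y; exact pd_g hg _ _ _ _
    rw [e]
    unfold pd
    rw [fderiv_fun_add ((ΓL_contDiff hg _ _ _).differentiable (by simp) x)
      ((ΓL_contDiff hg _ _ _).differentiable (by simp) x)]
    rfl
  rw [RiemLow_eq hg, RiemLow_eq hg, ΓΓ_symm hg α β μ ν, ΓΓ_symm hg α β ν μ]
  linarith [k μ ν, k ν μ, pd_comm (hg.1 α β) ν μ x]

lemma ginv_symm {g : (ι → ℝ) → Matrix ι ι ℝ} (hg : SmoothMetric g) (x : ι → ℝ) (μ ν : ι) :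
    ginv g x μ ν = ginv g x ν μ := by
  have h : Matrix.transpose (g x) = g x := by ext i j; exact hg.2.1 x j i
  have := Matrix.transpose_nonsing_inv (g x)
  rw [h] at this
  exact congrFun (congrFun this ν) μ

lemma Riem_contract {g : (ι → ℝ) → Matrix ι ι ℝ} (hg : SmoothMetric g) (μ ρ : ι) (x : ι → ℝ) :
    ∑ ν, ∑ σ, RiemLow g μ ν ρ σ x * ginv g x ν σ = Ric g μ ρ x := by
  have h : ∀ ν σ, RiemLow g μ ν ρ σ x * ginv g x ν σ
      = ∑ l, ginv g x σ ν * g x ν l * Riem g l μ σ ρ x := by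
    intro ν σ
    rw [Riem_anti1 hg, Riem_anti2, neg_neg, ginv_symm hg, RiemLow, Finset.sum_mul]
    exact Finset.sum_congr rfl fun l _ => by ring
  simp only [h]
  rw [Finset.sum_comm]
  unfold Ric
  refine Finset.sum_congr rfl fun σ _ => ?_
  rw [Finset.sum_comm]
  simp only [← Finset.sum_mul, ginv_mul_g hg]
  simp

lemma curv_eq {g : (ι → ℝ) → Matrix ι ι ℝ} (hg : SmoothMetric g) (x N L : ι → ℝ) (c : ℝ)
    (P : ι → ι → ℝ) (hP : ∀ μ ν, P μ ν = ginv g x μ ν - c * (N μ * L ν + N ν * L μ)) :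
    ∑ μ, ∑ ν, ∑ ρ, ∑ σ, RiemLow g μ ν ρ σ x * N μ * N ρ * P ν σ
      = ∑ μ, ∑ ν, Ric g μ ν x * N μ * N ν := by
  have h1 : ∑ μ, ∑ ν, ∑ ρ, ∑ σ, RiemLow g μ ν ρ σ x * N μ * N ρ * (N ν * L σ) = 0 := by
    have : ∑ μ, ∑ ν, ∑ ρ, ∑ σ, RiemLow g μ ν ρ σ x * N μ * N ρ * (N ν * L σ)
      = - ∑ μ, ∑ ν, ∑ ρ, ∑ σ, RiemLow g μ ν ρ σ x * N μ * N ρ * (N ν * L σ) := by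
      conv_lhs => rw [Finset.sum_comm]
      simp only [← Finset.sum_neg_distrib]
      refine Finset.sum_congr rfl fun μ _ => Finset.sum_congr rfl fun ν _ =>
        Finset.sum_congr rfl fun ρ _ => Finset.sum_congr rfl fun σ _ => ?_
      rw [Riem_anti1 hg ν μ]; ring
    linarith
  have h2 : ∑ μ, ∑ ν, ∑ ρ, ∑ σ, RiemLow g μ ν ρ σ x * N μ * N ρ * (N σ * L ν) = 0 := by
    refine Finset.sum_eq_zero fun μ _ => Finset.sum_eq_zero fun ν _ => ?_
    have : ∑ ρ, ∑ σ, RiemLow g μ ν ρ σ x * N μ * N ρ * (N σ * L ν)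
      = - ∑ ρ, ∑ σ, RiemLow g μ ν ρ σ x * N μ * N ρ * (N σ * L ν) := by
      conv_lhs => rw [Finset.sum_comm]
      simp only [← Finset.sum_neg_distrib]
      refine Finset.sum_congr rfl fun ρ _ => Finset.sum_congr rfl fun σ _ => ?_
      rw [Riem_anti2 g μ ν σ ρ]; ring
    linarith
  have h3 : ∑ μ, ∑ ν, ∑ ρ, ∑ σ, RiemLow g μ ν ρ σ x * N μ * N ρ * ginv g x ν σ
      = ∑ μ, ∑ ν, Ric g μ ν x * N μ * N ν := by
    refine Finset.sum_congr rfl fun μ _ => ?_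
    rw [Finset.sum_comm]
    refine Finset.sum_congr rfl fun ρ _ => ?_
    rw [← Riem_contract hg]
    simp only [Finset.sum_mul]
    refine Finset.sum_congr rfl fun ν _ => Finset.sum_congr rfl fun σ _ => ?_
    ring
  have h4 : ∀ μ ν ρ σ, RiemLow g μ ν ρ σ x * N μ * N ρ * P ν σ
      = RiemLow g μ ν ρ σ x * N μ * N ρ * ginv g x ν σ
        - (c * (RiemLow g μ ν ρ σ x * N μ * N ρ * (N ν * L σ))
        + c * (RiemLow g μ ν ρ σ x * N μ * N ρ * (N σ * L ν))) := by
    intro μ ν ρ σ; rw [hP]; ring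
  simp only [h4, Finset.sum_sub_distrib, Finset.sum_add_distrib, ← Finset.mul_sum, h1, h2, h3]
  ring

lemma gV_sum {g : (ι → ℝ) → Matrix ι ι ℝ} (hg : SmoothMetric g) (x v V W : ι → ℝ) :
    ∑ μ, ∑ ν, g x μ ν * (∑ ρ, ∑ σ, Γc g μ ρ σ x * v ρ * V σ) * W ν
      = ∑ ν, ∑ σ, ∑ ρ, ΓL g ν ρ σ x * v ρ * V σ * W ν := by
  rw [Finset.sum_comm]
  refine Finset.sum_congr rfl fun ν _ => ?_
  simp only [← ΓL_eq hg, Finset.mul_sum, Finset.sum_mul]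
  rw [Finset.sum_comm]
  conv_rhs => rw [Finset.sum_comm]
  refine Finset.sum_congr rfl fun ρ _ => ?_
  rw [Finset.sum_comm]
  refine Finset.sum_congr rfl fun σ _ => Finset.sum_congr rfl fun μ _ => ?_
  rw [hg.2.1 x μ ν]; ring

lemma sq_hasDerivAt {g : (ι → ℝ) → Matrix ι ι ℝ} (hg : SmoothMetric g) {γ V W : ℝ → ι → ℝ}
    (hγ : SmoothCurve γ) (hV : SmoothCurve V) (hW : SmoothCurve W)
    (pV : IsParallel g γ V) (pW : IsParallel g γ W) (u : ℝ) :
    HasDerivAt (fun u => sq g (γ u) (V u) (W u)) 0 u := by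
  have dv : ∀ {X : ℝ → ι → ℝ}, SmoothCurve X → ∀ μ, HasDerivAt (fun w => X w μ)
      (deriv (fun w => X w μ) u) u := fun hX μ => ((hX μ).differentiable (by simp) u).hasDerivAt
  have dγ : HasDerivAt γ (vel γ u) u := hasDerivAt_pi.2 fun μ => dv hγ μ
  have dg : ∀ μ ν, HasDerivAt (fun w => g (γ w) μ ν)
      (∑ ρ, pd (fun y => g y μ ν) ρ (γ u) * vel γ u ρ) u := by
    intro μ ν
    have h := (((hg.1 μ ν).differentiable (by simp) (γ u)).hasFDerivAt).comp_hasDerivAt u dγ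
    refine h.congr_deriv ?_
    conv_lhs => rw [pi_eq_sum_univ (vel γ u)]
    rw [map_sum]
    refine Finset.sum_congr rfl fun ρ _ => ?_
    unfold pd
    rw [map_smul, smul_eq_mul, mul_comm]
    congr 2
    funext i
    simp [Pi.single_apply, eq_comm]
  have par : ∀ {X : ℝ → ι → ℝ}, IsParallel g γ X → ∀ μ, deriv (fun w => X w μ) u
      = - ∑ ρ, ∑ σ, Γc g μ ρ σ (γ u) * vel γ u ρ * X u σ := by
    intro X hX μ
    have := hX u μ
    unfold covD at this
    linarith
  have tot := HasDerivAt.fun_sum (u := Finset.univ) fun μ _ =>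
    HasDerivAt.fun_sum (u := Finset.univ) fun ν _ => ((dg μ ν).fun_mul (dv hV μ)).fun_mul (dv hW ν)
  unfold sq
  refine tot.congr_deriv ?_
  have t1 := gV_sum hg (γ u) (vel γ u) (V u) (W u)
  have t2 := gV_sum hg (γ u) (vel γ u) (W u) (V u)
  have t3 : ∑ μ, ∑ ν, (∑ ρ, pd (fun y => g y μ ν) ρ (γ u) * vel γ u ρ) * V u μ * W u ν
      = (∑ ν, ∑ σ, ∑ ρ, ΓL g ν ρ σ (γ u) * vel γ u ρ * V u σ * W u ν)
       + (∑ ν, ∑ σ, ∑ ρ, ΓL g ν ρ σ (γ u) * vel γ u ρ * W u σ * V u ν) := by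
    conv_rhs => arg 1; rw [Finset.sum_comm]
    simp only [← Finset.sum_add_distrib, Finset.sum_mul]
    refine Finset.sum_congr rfl fun μ _ => Finset.sum_congr rfl fun ν _ =>
      Finset.sum_congr rfl fun ρ _ => ?_
    rw [pd_g hg]; ring
  have t4 : ∑ μ, ∑ ν, g (γ u) μ ν * V u μ * (∑ ρ, ∑ σ, Γc g ν ρ σ (γ u) * vel γ u ρ * W u σ)
      = ∑ ν, ∑ μ, g (γ u) ν μ * (∑ ρ, ∑ σ, Γc g ν ρ σ (γ u) * vel γ u ρ * W u σ) * V u μ := by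
    rw [Finset.sum_comm]
    refine Finset.sum_congr rfl fun ν _ => Finset.sum_congr rfl fun μ _ => ?_
    rw [hg.2.1 _ ν μ]; ring
  simp only [par pV, par pW, add_mul, mul_neg, neg_mul, Finset.sum_add_distrib,
    Finset.sum_neg_distrib]
  rw [t3, t1, t4, t2]
  ring

lemma sq_const {g : (ι → ℝ) → Matrix ι ι ℝ} (hg : SmoothMetric g) {γ V W : ℝ → ι → ℝ}
    (hγ : SmoothCurve γ) (hV : SmoothCurve V) (hW : SmoothCurve W)
    (pV : IsParallel g γ V) (pW : IsParallel g γ W) (u : ℝ) :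
    sq g (γ u) (V u) (W u) = sq g (γ 0) (V 0) (W 0) :=
  is_const_of_deriv_eq_zero
    (fun v => (sq_hasDerivAt hg hγ hV hW pV pW v).differentiableAt)
    (fun v => (sq_hasDerivAt hg hγ hV hW pV pW v).deriv) u 0

lemma sq_symm {g : (ι → ℝ) → Matrix ι ι ℝ} (hg : SmoothMetric g) (x v w : ι → ℝ) :
    sq g x v w = sq g x w v := by
  unfold sq
  rw [Finset.sum_comm]
  refine Finset.sum_congr rfl fun ν _ => Finset.sum_congr rfl fun μ _ => ?_
  rw [hg.2.1 _ ν μ]; ring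

lemma vel_smooth {γ : ℝ → ι → ℝ} (hγ : SmoothCurve γ) : SmoothCurve (vel γ) := by
  intro μ
  exact ((contDiff_infty_iff_deriv (f := fun w => γ w μ)).1 (hγ μ)).2

/-- Completeness relation of a null frame. -/
lemma frame_complete (hc : Fintype.card ι = Fintype.card κ + 2)
    {g : (ι → ℝ) → Matrix ι ι ℝ} (hg : SmoothMetric g) (x N L : ι → ℝ) (E : κ → ι → ℝ)
    (hE : ∀ A B, sq g x (E A) (E B) = if A = B then (1 : ℝ) else 0)
    (hNE : ∀ A, sq g x N (E A) = 0) (hLE : ∀ A, sq g x L (E A) = 0)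
    (hN : sq g x N N = 0) (hL : sq g x L L = 0) (hNL : sq g x N L ≠ 0) (μ ν : ι) :
    ∑ A, E A μ * E A ν = ginv g x μ ν - (sq g x N L)⁻¹ * (N μ * L ν + N ν * L μ) := by
  set c := sq g x N L with hcdef
  -- frame and dual frame
  let F : Matrix ι (κ ⊕ Fin 2) ℝ := Matrix.of fun μ a => Sum.elim (fun A => E A μ) ![N μ, L μ] a
  let H : Matrix (κ ⊕ Fin 2) ι ℝ := Matrix.of fun a μ =>
    Sum.elim (fun A => E A μ) ![c⁻¹ * L μ, c⁻¹ * N μ] a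
  have sqm : ∀ v w : ι → ℝ, ∑ j, (∑ i, v i * g x i j) * w j = sq g x v w := by
    intro v w
    unfold sq
    rw [Finset.sum_comm]
    simp only [Finset.sum_mul]
    exact Finset.sum_congr rfl fun ν _ => Finset.sum_congr rfl fun μ _ => by ring
  have sqc : ∀ (r : ℝ) (v w : ι → ℝ), ∑ j, (∑ i, r * v i * g x i j) * w j = r * sq g x v w := by
    intro r v w
    rw [← sqm, Finset.mul_sum]
    simp only [mul_assoc, ← Finset.mul_sum]
  have h1 : (H * g x) * F = 1 := by
    ext a b
    rcases a with A | a <;> rcases b with B | b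
    · simp [Matrix.mul_apply, H, F, sqm, hE, Matrix.one_apply]
    · fin_cases b <;> simp [Matrix.mul_apply, H, F, sqm, sq_symm hg x (E A), hNE, hLE]
    · fin_cases a <;> simp [Matrix.mul_apply, H, F, sqc, hNE, hLE]
    · fin_cases a <;> fin_cases b <;>
        simp [Matrix.mul_apply, H, F, sqc, hN, hL, sq_symm hg x L N, ← hcdef, hNL]
  have h2 : F * (H * g x) = 1 :=
    (Matrix.mul_eq_one_comm_of_card_eq _ _ _ (by simp [hc])).1 h1
  have h3 : F * H = (g x)⁻¹ := by
    rw [← Matrix.mul_assoc] at h2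
    exact (Matrix.inv_eq_left_inv h2).symm
  have h4 := congrFun (congrFun h3 μ) ν
  simp [Matrix.mul_apply, F, H] at h4
  unfold ginv
  rw [← h4]
  ring

/-- For a spacelike submanifold of co-dimension 2 with null
normals `n, ℓ` at `q`, along the null geodesic with initial tangent `n`:
`P^{μν} = g^{μν} − (N_ρL^ρ)⁻¹(N^μL^ν + N^νL^μ)`, and consequently the curvature
condition `R_{μνρσ}N^μN^ρP^{νσ} ≥ 0` along `γ` is equivalent to the null
convergence condition `R_{μν}N^μN^ν ≥ 0` along `γ`. -/
theorem codim_two_projector_and_null_convergence {D : ℕ} (hD : 2 ≤ D)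
    (g : (Fin D → ℝ) → Matrix (Fin D) (Fin D) ℝ) (hg : Lorentzian g)
    (T : (Fin D → ℝ) → Fin D → ℝ) (hT : TimeOrientation g T)
    (q : Fin D → ℝ)
    -- an orthonormal basis of the tangent space of the co-dimension 2
    -- spacelike submanifold `ζ` at `q`
    (e : Fin (D - 2) → Fin D → ℝ)
    (heON : ∀ A B, sq g q (e A) (e B) = if A = B then (1 : ℝ) else 0)
    -- the two future-pointing null normals at `q`
    (nv lv : Fin D → ℝ)
    (hn : NullVec g q nv) (hl : NullVec g q lv)
    (hnf : FutureCausal g T q nv) (hlf : FutureCausal g T q lv)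
    (hne : ∀ A, sq g q nv (e A) = 0) (hle : ∀ A, sq g q lv (e A) = 0)
    (hnl : sq g q nv lv ≠ 0)
    -- the null geodesic with initial tangent `n`
    (γ : ℝ → Fin D → ℝ) (hγs : SmoothCurve γ) (hγ0 : γ 0 = q)
    (hγv : vel γ 0 = nv) (hgeo : IsGeodesic g γ)
    -- the parallel propagations of `ℓ` and of the tangent basis along `γ`
    (L : ℝ → Fin D → ℝ) (hLs : SmoothCurve L) (hL0 : L 0 = lv)
    (hLpar : IsParallel g γ L)
    (E : Fin (D - 2) → ℝ → Fin D → ℝ)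
    (hEs : ∀ A, SmoothCurve (E A)) (hE0 : ∀ A, E A 0 = e A)
    (hEpar : ∀ A, IsParallel g γ (E A)) :
    (∀ (u : ℝ) (μ ν : Fin D),
      (∑ A, E A u μ * E A u ν)
        = ginv g (γ u) μ ν
          - (sq g (γ u) (vel γ u) (L u))⁻¹
              * (vel γ u μ * L u ν + vel γ u ν * L u μ)) ∧
    ((∀ u : ℝ, 0 ≤ ∑ μ, ∑ ν, ∑ ρ, ∑ σ, RiemLow g μ ν ρ σ (γ u)
          * vel γ u μ * vel γ u ρ * (∑ A, E A u ν * E A u σ))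
      ↔ (∀ u : ℝ, 0 ≤ ∑ μ, ∑ ν, Ric g μ ν (γ u) * vel γ u μ * vel γ u ν)) := by
  have hm : SmoothMetric g := hg.1
  have hv := vel_smooth hγs
  have hvp : IsParallel g γ (vel γ) := hgeo
  have key : ∀ (u : ℝ) (μ ν : Fin D),
      (∑ A, E A u μ * E A u ν)
        = ginv g (γ u) μ ν
          - (sq g (γ u) (vel γ u) (L u))⁻¹
              * (vel γ u μ * L u ν + vel γ u ν * L u μ) := by
    intro u
    apply frame_complete (by simp; omega) hm (γ u) (vel γ u) (L u) (fun A => E A u)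
    · intro A B
      rw [sq_const hm hγs (hEs A) (hEs B) (hEpar A) (hEpar B), hγ0, hE0, hE0, heON]
    · intro A
      rw [sq_const hm hγs hv (hEs A) hvp (hEpar A), hγ0, hE0, hγv, hne]
    · intro A
      rw [sq_const hm hγs hLs (hEs A) hLpar (hEpar A), hγ0, hE0, hL0, hle]
    · rw [sq_const hm hγs hv hv hvp hvp, hγ0, hγv, hn.1]
    · rw [sq_const hm hγs hLs hLs hLpar hLpar, hγ0, hL0, hl.1]
    · rw [sq_const hm hγs hv hLs hvp hLpar, hγ0, hγv, hL0]
      exact hnl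
  refine ⟨key, forall_congr' fun u => ?_⟩
  rw [curv_eq hm (γ u) (vel γ u) (L u) _ (fun ν σ => ∑ A, E A u ν * E A u σ) (key u)]

end Paper
end
end
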